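/- Let m ∈ ℤ≥0, λ ∈ ℤ, and y, u, ℓ ∈ ℤ≥0 with ℓ + y + 2u ≤ 2m + 1. Then S(y,u,ℓ,λ) = T(2m+2−2λ−2ℓ−4u−y, u, ℓ), where S(y,u,ℓ,λ) = Σ_{0 ≤ n ≤ 2m, n even} Σ_{c,e,r ≥ 0, c+e+r=u} q^{(u+y−n)(ℓ+u−1)+c−e} C_q(ℓ, −u−y−e+c+n) C_q(2m+2−2λ−5u−3ℓ−2y−e+c+n, r) C_{q²}(m−λ−2u−ℓ−y+c+n/2, c) C_{q²}(m+1−λ−2ℓ−y−3u+n/2+c, e) − Σ_{1 ≤ n ≤ 2m+1, n odd} Σ_{c,e,r ≥ 0, c+e+r=u} q^{(u+y−n)(ℓ+u−1)} C_q(ℓ, −u−y−e+c+n) C_q(2m+2−2λ−5u−3ℓ−2y−e+c+n, r) C_{q²}(m−λ−2u−ℓ−y+c+(n+1)/2, c) C_{q²}(m−λ−2ℓ−y−3u+(n+1)/2+c, e). -/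

import Mathlib

open Finset

noncomputable section

/-- The field `ℚ(q)` of rational functions over `ℚ`. -/
abbrev F : Type := RatFunc ℚ

/-- The indeterminate `q`. -/
noncomputable def qq : F := RatFunc.X

/-- The quantum integer `[n]` with base `v`: `(v^n - v^(-n))/(v - v⁻¹)`. -/
noncomputable def qint (v : F) (n : ℤ) : F := (v ^ n - v ^ (-n)) / (v - v⁻¹)

/-- The quantum factorial `[m]! = [1][2]⋯[m]` with base `v`. -/
noncomputable def qfact (v : F) (m : ℕ) : F := ∏ k ∈ range m, qint v ((k : ℤ) + 1)

/-- The quantum binomial coefficient `C_v(n,d) = [n][n-1]⋯[n-d+1]/[d]!` for `d ≥ 0`,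
and `0` for `d < 0`. -/
noncomputable def qbinom (v : F) (n d : ℤ) : F :=
  if d < 0 then 0
  else (∏ k ∈ range d.toNat, qint v (n - (k : ℤ))) / qfact v d.toNat

/-- The function `T(w,u,ℓ)` of [CLW, (3.14)]. -/
noncomputable def T (w : ℤ) (u ℓ : ℕ) : F :=
  (∑ c ∈ range (u + 1), ∑ e ∈ range (u + 1 - c), ∑ t ∈ range (ℓ + 1),
      (let r : ℕ := u - c - e;
       if Even ((t : ℤ) + w - (r : ℤ)) then
         qq ^ (-(t : ℤ) * ((ℓ : ℤ) + (u : ℤ) - 1) + ((ℓ : ℤ) + (u : ℤ)) * ((c : ℤ) - (e : ℤ)))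
           * qbinom qq (ℓ : ℤ) (t : ℤ) * qbinom qq (w + (t : ℤ) - (ℓ : ℤ)) (r : ℤ)
           * qbinom (qq ^ 2) ((u : ℤ) - 1 + (w + (t : ℤ) - (r : ℤ)) / 2) (c : ℤ)
           * qbinom (qq ^ 2) ((w + (t : ℤ) - (r : ℤ)) / 2 - (ℓ : ℤ)) (e : ℤ)
       else 0))
  - (∑ c ∈ range (u + 1), ∑ e ∈ range (u + 1 - c), ∑ t ∈ range (ℓ + 1),
      (let r : ℕ := u - c - e;
       if ¬ Even ((t : ℤ) + w - (r : ℤ)) then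
         qq ^ (-(t : ℤ) * ((ℓ : ℤ) + (u : ℤ) - 1) + ((ℓ : ℤ) + (u : ℤ) - 1) * ((c : ℤ) - (e : ℤ)))
           * qbinom qq (ℓ : ℤ) (t : ℤ) * qbinom qq (w + (t : ℤ) - (ℓ : ℤ)) (r : ℤ)
           * qbinom (qq ^ 2) ((u : ℤ) + (w + (t : ℤ) - (r : ℤ) - 1) / 2) (c : ℤ)
           * qbinom (qq ^ 2) ((w + (t : ℤ) - (r : ℤ) - 1) / 2 - (ℓ : ℤ)) (e : ℤ)
       else 0))

/-- The function `S(y,u,ℓ,λ)` of [CLW, (4.8)] (depending also on `m`). -/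
noncomputable def S (m : ℕ) (lmd : ℤ) (y u ℓ : ℕ) : F :=
  (∑ n ∈ range (2 * m + 2), ∑ c ∈ range (u + 1), ∑ e ∈ range (u + 1 - c),
      (let r : ℕ := u - c - e;
       if Even n then
         qq ^ (((u : ℤ) + (y : ℤ) - (n : ℤ)) * ((ℓ : ℤ) + (u : ℤ) - 1) + (c : ℤ) - (e : ℤ))
           * qbinom qq (ℓ : ℤ) (-(u : ℤ) - (y : ℤ) - (e : ℤ) + (c : ℤ) + (n : ℤ))
           * qbinom qq (2 * (m : ℤ) + 2 - 2 * lmd - 5 * (u : ℤ) - 3 * (ℓ : ℤ) - 2 * (y : ℤ)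
               - (e : ℤ) + (c : ℤ) + (n : ℤ)) (r : ℤ)
           * qbinom (qq ^ 2) ((m : ℤ) - lmd - 2 * (u : ℤ) - (ℓ : ℤ) - (y : ℤ) + (c : ℤ)
               + (n : ℤ) / 2) (c : ℤ)
           * qbinom (qq ^ 2) ((m : ℤ) + 1 - lmd - 2 * (ℓ : ℤ) - (y : ℤ) - 3 * (u : ℤ)
               + (n : ℤ) / 2 + (c : ℤ)) (e : ℤ)
       else 0))
  - (∑ n ∈ range (2 * m + 2), ∑ c ∈ range (u + 1), ∑ e ∈ range (u + 1 - c),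
      (let r : ℕ := u - c - e;
       if ¬ Even n then
         qq ^ (((u : ℤ) + (y : ℤ) - (n : ℤ)) * ((ℓ : ℤ) + (u : ℤ) - 1))
           * qbinom qq (ℓ : ℤ) (-(u : ℤ) - (y : ℤ) - (e : ℤ) + (c : ℤ) + (n : ℤ))
           * qbinom qq (2 * (m : ℤ) + 2 - 2 * lmd - 5 * (u : ℤ) - 3 * (ℓ : ℤ) - 2 * (y : ℤ)
               - (e : ℤ) + (c : ℤ) + (n : ℤ)) (r : ℤ)
           * qbinom (qq ^ 2) ((m : ℤ) - lmd - 2 * (u : ℤ) - (ℓ : ℤ) - (y : ℤ) + (c : ℤ)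
               + ((n : ℤ) + 1) / 2) (c : ℤ)
           * qbinom (qq ^ 2) ((m : ℤ) - lmd - 2 * (ℓ : ℤ) - (y : ℤ) - 3 * (u : ℤ)
               + ((n : ℤ) + 1) / 2 + (c : ℤ)) (e : ℤ)
       else 0))

theorem qbinom_neg (v : F) (n d : ℤ) (h : d < 0) : qbinom v n d = 0 := by
  simp [qbinom, h]

theorem qbinom_big (v : F) (l : ℕ) (d : ℤ) (h : (l : ℤ) < d) : qbinom v (l : ℤ) d = 0 := by
  have hd : ¬ d < 0 := by omega
  unfold qbinom
  rw [if_neg hd, Finset.prod_eq_zero (i := l), zero_div]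
  · simp only [Finset.mem_range]; omega
  · simp [qint]

theorem sum_shift (N l k : ℕ) (f g : ℕ → F) (hk : k + l < N)
    (hlow : ∀ n, n < k → f n = 0) (hhigh : ∀ n, k + l < n → f n = 0)
    (hfg : ∀ t, t ≤ l → f (k + t) = g t) :
    ∑ n ∈ range N, f n = ∑ t ∈ range (l + 1), g t := by
  symm
  apply Finset.sum_of_injOn (fun t => k + t)
  · intro a _ b _ hab
    simpa using hab
  · intro a ha
    simp only [Finset.coe_range, Set.mem_Iio] at ha ⊢
    omega
  · intro n _ hn
    rcases lt_or_ge n k with h1 | h1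
    · exact hlow n h1
    · apply hhigh
      by_contra h2
      apply hn
      refine ⟨n - k, ?_, ?_⟩
      · simp only [Finset.coe_range, Set.mem_Iio]; omega
      · simp only []; omega
  · intro t ht
    simp only [Finset.mem_range] at ht
    exact (hfg t (by omega)).symm

/-- `S(y,u,ℓ,λ) = T(2m+2−2λ−2ℓ−4u−y, u, ℓ)` for `ℓ + y + 2u ≤ 2m + 1`. -/
theorem S_eq_T (m : ℕ) (lmd : ℤ) (y u ℓ : ℕ) (h : ℓ + y + 2 * u ≤ 2 * m + 1) :
    S m lmd y u ℓ
      = T (2 * (m : ℤ) + 2 - 2 * lmd - 2 * (ℓ : ℤ) - 4 * (u : ℤ) - (y : ℤ)) u ℓ := by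
  unfold S T
  congr 1
  · rw [Finset.sum_comm]
    refine Finset.sum_congr rfl fun c hc => ?_
    rw [Finset.sum_comm]
    refine Finset.sum_congr rfl fun e he => ?_
    simp only [Finset.mem_range] at hc he
    obtain ⟨r, hr⟩ : ∃ r, r = u - c - e := ⟨_, rfl⟩
    have hu : (u : ℤ) = c + e + r := by omega
    obtain ⟨k, hk⟩ : ∃ k, k = u + y + e - c := ⟨_, rfl⟩
    have hk' : (k : ℤ) = u + y + e - c := by omega
    apply sum_shift _ _ k
    · omega
    · intro n hn
      rw [qbinom_neg qq (ℓ : ℤ) _ (by omega)]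
      simp
    · intro n hn
      rw [qbinom_big qq ℓ _ (by omega)]
      simp
    · intro t ht
      simp only [← hr]
      have hpar : Even (k + t) ↔ Even ((t : ℤ) + (2 * (m : ℤ) + 2 - 2 * lmd - 2 * (ℓ : ℤ) - 4 * (u : ℤ) - (y : ℤ)) - (r : ℤ)) := by
        rw [← Int.even_coe_nat, Int.even_iff, Int.even_iff]
        push_cast
        omega
      by_cases hE : Even (k + t)
      · have hE2 := hpar.1 hE
        rw [if_pos hE, if_pos hE2]
        have hE3 := hE
        rw [← Int.even_coe_nat, Int.even_iff] at hE3
        push_cast at hE3 ⊢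
        congr 1
        · congr 1
          · congr 1
            · congr 1
              · congr 1
                rw [hk']; ring
              · congr 1
                omega
            · congr 1
              omega
          · congr 1
            omega
        · congr 1
          omega
      · rw [if_neg (by simpa using hE), if_neg (by rw [← hpar]; simpa using hE)]
  · rw [Finset.sum_comm]
    refine Finset.sum_congr rfl fun c hc => ?_
    rw [Finset.sum_comm]
    refine Finset.sum_congr rfl fun e he => ?_
    simp only [Finset.mem_range] at hc he
    obtain ⟨r, hr⟩ : ∃ r, r = u - c - e := ⟨_, rfl⟩
    have hu : (u : ℤ) = c + e + r := by omega
    obtain ⟨k, hk⟩ : ∃ k, k = u + y + e - c := ⟨_, rfl⟩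
    have hk' : (k : ℤ) = u + y + e - c := by omega
    apply sum_shift _ _ k
    · omega
    · intro n hn
      rw [qbinom_neg qq (ℓ : ℤ) _ (by omega)]
      simp
    · intro n hn
      rw [qbinom_big qq ℓ _ (by omega)]
      simp
    · intro t ht
      simp only [← hr]
      have hpar : Even (k + t) ↔ Even ((t : ℤ) + (2 * (m : ℤ) + 2 - 2 * lmd - 2 * (ℓ : ℤ) - 4 * (u : ℤ) - (y : ℤ)) - (r : ℤ)) := by
        rw [← Int.even_coe_nat, Int.even_iff, Int.even_iff]
        push_cast
        omega
      by_cases hE : Even (k + t)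
      · rw [if_neg (by simpa using hE), if_neg (by rw [← hpar]; simpa using hE)]
      · have hE2 := (not_congr hpar).1 hE
        rw [if_pos hE, if_pos hE2]
        have hE3 := hE
        rw [← Int.even_coe_nat, Int.even_iff] at hE3
        push_cast at hE3 ⊢
        congr 1
        · congr 1
          · congr 1
            · congr 1
              · congr 1
                rw [hk']; ring
              · congr 1
                omega
            · congr 1
              omega
          · congr 1
            omega
        · congr 1
          omega

end
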